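/- Let X = ω-lim(X_k, d_k, ⋆_k) be the ultralimit of a sequence of based CAT(0) spaces with respect to a nonprincipal ultrafilter ω, and let x, y, z ∈ X with x ≠ y and x ≠ z. Let (x_k), (y_k), (z_k) be sequences representing x, y, z respectively. Then there is a sequence (x'_k) representing x with x'_k ∈ [x_k, y_k] for all k, such that for ALL sequences (y'_k) and (z'_k) representing y and z, one has ω-lim ∠_{x'_k}(y'_k, z'_k) = ∠_x(y,z). -/

import Mathlib

noncomputable section

open Metric Set Filter Real Pointwise

/-! ## Geodesics and CAT(0) spaces -/

variable {X : Type*}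

/-- A geodesic segment from `x` to `y`, parametrized by arclength on `[0, dist x y]`. -/
def IsGeodesicSegment [MetricSpace X] (f : ℝ → X) (x y : X) : Prop :=
  f 0 = x ∧ f (dist x y) = y ∧
    ∀ s ∈ Set.Icc (0:ℝ) (dist x y), ∀ t ∈ Set.Icc (0:ℝ) (dist x y),
      dist (f s) (f t) = |s - t|

/-- A geodesic metric space: every pair of points is joined by a geodesic. -/
def GeodesicSpace (X : Type*) [MetricSpace X] : Prop :=
  ∀ x y : X, ∃ f : ℝ → X, IsGeodesicSegment f x y

/-- A CAT(0) space: a geodesic space satisfying the CN-inequality of Bruhat–Tits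
(equivalent to the CAT(0) comparison inequality for complete geodesic spaces). -/
def CAT0Space (X : Type*) [MetricSpace X] : Prop :=
  GeodesicSpace X ∧
    ∀ x y z m : X, dist y m = dist y z / 2 → dist z m = dist y z / 2 →
      dist x m ^ 2 ≤ (dist x y ^ 2 + dist x z ^ 2) / 2 - dist y z ^ 2 / 4

/-- The geodesic segment `[x,y]` (as a set) in a uniquely geodesic space:
the set of points lying between `x` and `y`. -/
def geodesicSegSet [MetricSpace X] (x y : X) : Set X :=
  {z : X | dist x z + dist z y = dist x y}

/-- A complete geodesic line, parametrized by arclength. -/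
def IsGeodesicLine [MetricSpace X] (c : ℝ → X) : Prop :=
  ∀ s t : ℝ, dist (c s) (c t) = |s - t|

/-- A geodesic ray, parametrized by arclength on `[0,∞)`. -/
def IsGeodesicRay [MetricSpace X] (c : ℝ → X) : Prop :=
  ∀ s t : ℝ, 0 ≤ s → 0 ≤ t → dist (c s) (c t) = |s - t|

/-- A subset `A` is geodesic if any two of its points are joined by a geodesic inside `A`. -/
def IsGeodesicSubset [MetricSpace X] (A : Set X) : Prop :=
  ∀ x ∈ A, ∀ y ∈ A, ∃ f : ℝ → X, IsGeodesicSegment f x y ∧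
    ∀ t ∈ Set.Icc (0:ℝ) (dist x y), f t ∈ A

/-! ## Angles -/

/-- The comparison angle at `p` of the triple `(p,x,y)`: the angle at the vertex corresponding
to `p` in a Euclidean comparison triangle, computed by the law of cosines. -/
def cangle [MetricSpace X] (p x y : X) : ℝ :=
  Real.arccos ((dist p x ^ 2 + dist p y ^ 2 - dist x y ^ 2) / (2 * dist p x * dist p y))

/-- The (Alexandrov) angle at `p` between the geodesics `[p,x]` and `[p,y]`.  In a CAT(0)
space comparison angles are monotone along the geodesics, so the Alexandrov angle is the
infimum of the comparison angles over interior points of the two segments. -/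
def angle [MetricSpace X] (p x y : X) : ℝ :=
  sInf {θ : ℝ | ∃ x' ∈ geodesicSegSet p x, ∃ y' ∈ geodesicSegSet p y,
    x' ≠ p ∧ y' ≠ p ∧ θ = cangle p x' y'}

/-! ## Flats -/

/-- A `k`-flat: an isometrically embedded copy of Euclidean `k`-space. -/
def IsKFlat [MetricSpace X] (k : ℕ) (F : Set X) : Prop :=
  ∃ f : EuclideanSpace ℝ (Fin k) → X, Isometry f ∧ Set.range f = F

/-- A flat: an isometrically embedded copy of Euclidean `k`-space for some `k ≥ 2`. -/
def IsFlat [MetricSpace X] (F : Set X) : Prop := ∃ k : ℕ, 2 ≤ k ∧ IsKFlat k F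

/-- A flat is maximal if it is not contained in a finite tubular neighborhood of a
higher-dimensional flat. -/
def IsMaximalFlat [MetricSpace X] (F : Set X) : Prop :=
  IsFlat F ∧ ¬ ∃ (k k' : ℕ) (F' : Set X) (r : ℝ),
    IsKFlat k F ∧ IsKFlat k' F' ∧ k < k' ∧ F ⊆ Metric.cthickening r F'

/-! ## Geometric group actions -/

/-- A geometric action: an action by isometries that is properly discontinuous and cocompact. -/
def GeometricAction (Γ X : Type*) [Group Γ] [MetricSpace X] [MulAction Γ X] : Prop :=
  (∀ g : Γ, Isometry fun x : X => g • x) ∧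
  (∀ K L : Set X, IsCompact K → IsCompact L → {g : Γ | ((g • K) ∩ L).Nonempty}.Finite) ∧
  ∃ K : Set X, IsCompact K ∧ ⋃ g : Γ, g • K = Set.univ

/-! ## Isolated flats (IF2) -/

/-- The family `𝓕` witnesses that `X` has isolated flats (formulation (IF2)):
`𝓕` is a `Γ`-invariant family of flats, every flat of `X` lies in a uniformly bounded
tubular neighborhood of a member of `𝓕`, and `ρ`-tubular neighborhoods of distinct members
of `𝓕` have uniformly bounded overlap. -/
structure IsolatedFlatsFamily (Γ : Type*) {X : Type*} [Group Γ] [MetricSpace X]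
    [MulAction Γ X] (𝓕 : Set (Set X)) : Prop where
  flats : ∀ F ∈ 𝓕, IsFlat F
  invariant : ∀ (g : Γ), ∀ F ∈ 𝓕, g • F ∈ 𝓕
  exists_bound : ∃ D : ℝ, ∀ F : Set X, IsFlat F → ∃ F' ∈ 𝓕, F ⊆ Metric.cthickening D F'
  isolated : ∀ ρ : ℝ, ∃ κ : ℝ, ∀ F ∈ 𝓕, ∀ F' ∈ 𝓕, F ≠ F' →
    Metric.diam (Metric.cthickening ρ F ∩ Metric.cthickening ρ F') < κ

/-- `X` has isolated flats (with respect to some family). -/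
def HasIsolatedFlats (Γ X : Type*) [Group Γ] [MetricSpace X] [MulAction Γ X] : Prop :=
  ∃ 𝓕 : Set (Set X), IsolatedFlatsFamily Γ 𝓕
/-! ## The ideal boundary and the Tits metric -/

/-- The space of geodesic rays in `X`. -/
abbrev GeodesicRays (X : Type*) [MetricSpace X] := {c : ℝ → X // IsGeodesicRay c}

/-- Two rays are asymptotic if they are at bounded distance. -/
def asympSetoid (X : Type*) [MetricSpace X] : Setoid (GeodesicRays X) where
  r c c' := ∃ K : ℝ, ∀ t : ℝ, 0 ≤ t → dist (c.1 t) (c'.1 t) ≤ K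
  iseqv := by
    refine ⟨fun c => ⟨0, fun t _ => by simp⟩, ?_, ?_⟩
    · rintro c c' ⟨K, hK⟩
      exact ⟨K, fun t ht => by rw [dist_comm]; exact hK t ht⟩
    · rintro a b c ⟨K, hK⟩ ⟨K', hK'⟩
      exact ⟨K + K', fun t ht =>
        (dist_triangle _ (b.1 t) _).trans (add_le_add (hK t ht) (hK' t ht))⟩

/-- The ideal boundary of `X`: asymptoty classes of geodesic rays. -/
def IdealBoundary (X : Type*) [MetricSpace X] := Quotient (asympSetoid X)

/-- The angle at `p` between two geodesic rays `c, c'` issuing from `p`: in a CAT(0) space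
this is the infimum (= decreasing limit) of comparison angles of points along the rays. -/
def rayAngleAt [MetricSpace X] (p : X) (c c' : ℝ → X) : ℝ :=
  sInf {θ : ℝ | ∃ t > (0:ℝ), ∃ t' > (0:ℝ), θ = cangle p (c t) (c' t')}

/-- The angle `∠_p(ξ,η)` at a point `p` between two ideal boundary points, computed using
geodesic rays from `p` representing them. -/
def angleAtBetween [MetricSpace X] (p : X) (ξ η : IdealBoundary X) : ℝ :=
  sSup {θ : ℝ | ∃ c c' : GeodesicRays X, c.1 0 = p ∧ c'.1 0 = p ∧
    Quotient.mk (asympSetoid X) c = ξ ∧ Quotient.mk (asympSetoid X) c' = η ∧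
    θ = rayAngleAt p c.1 c'.1}

/-- The Tits angle metric `∠_T(ξ,η) = sup_p ∠_p(ξ,η)` on the ideal boundary. -/
def titsAngle [MetricSpace X] (ξ η : IdealBoundary X) : ℝ :=
  sSup (Set.range fun p : X => angleAtBetween p ξ η)

/-- The topology induced by the Tits angle metric on the ideal boundary.  (On a proper
CAT(0) space the Tits angle metric and the Tits length metric `Td` induce the same
topology, and the same isometry types of components consisting of spheres.) -/
def titsTopology (X : Type*) [MetricSpace X] : TopologicalSpace (IdealBoundary X) :=
  TopologicalSpace.generateFrom
    {U : Set (IdealBoundary X) | ∃ (ξ : IdealBoundary X) (ε : ℝ), U = {η | titsAngle ξ η < ε}}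

/-- A subset of the Tits boundary is a standard Euclidean sphere if it is isometric (in the
Tits metric) to the unit sphere of a Euclidean space `E^k` with its angular metric. -/
def IsStandardSphere [MetricSpace X] (C : Set (IdealBoundary X)) : Prop :=
  ∃ k : ℕ, 1 ≤ k ∧ ∃ e : IdealBoundary X → EuclideanSpace ℝ (Fin k),
    (∀ ξ ∈ C, ‖e ξ‖ = 1) ∧
    (∀ v : EuclideanSpace ℝ (Fin k), ‖v‖ = 1 → ∃ ξ ∈ C, e ξ = v) ∧
    Set.InjOn e C ∧
    ∀ ξ ∈ C, ∀ η ∈ C, titsAngle ξ η = Real.arccos (inner ℝ (e ξ) (e η) : ℝ)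

/-- Every connected component of the Tits boundary of `X` is an isolated point or a
standard Euclidean sphere. -/
def TitsBoundaryIsolatedOrSpheres (X : Type*) [MetricSpace X] : Prop :=
  ∀ ξ : IdealBoundary X,
    (@connectedComponent _ (titsTopology X) ξ = {ξ} ∧ @IsOpen _ (titsTopology X) {ξ}) ∨
    IsStandardSphere (@connectedComponent _ (titsTopology X) ξ)

/-- The trace at infinity of a subset `Y ⊆ X`: ideal points represented by rays inside `Y`. -/
def boundaryOfSet [MetricSpace X] (Y : Set X) : Set (IdealBoundary X) :=
  {ξ | ∃ c : GeodesicRays X, Quotient.mk (asympSetoid X) c = ξ ∧ ∀ t : ℝ, 0 ≤ t → c.1 t ∈ Y}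
/-! ## Ultrafilters, ultralimits, and asymptotic cones -/

/-- A nonprincipal ultrafilter on `ℕ`. -/
def IsNonprincipal (ω : Ultrafilter ℕ) : Prop := ∀ s : Set ℕ, s.Finite → s ∉ ω

/-- A real sequence that is bounded along an ultrafilter converges along that
ultrafilter to its `limUnder`. -/
theorem tendsto_limUnder_of_bdd (ω : Ultrafilter ℕ) {u : ℕ → ℝ} {C : ℝ}
    (h : ∀ᶠ n in (ω : Filter ℕ), |u n| ≤ C) :
    Filter.Tendsto u (ω : Filter ℕ) (nhds (limUnder (ω : Filter ℕ) u)) := by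
  have hC : 0 ≤ C := by
    obtain ⟨n, hn⟩ := h.exists
    exact (abs_nonneg _).trans hn
  set u' : ℕ → ℝ := fun n => max (-C) (min C (u n)) with hu'
  have hmem : ∀ n, u' n ∈ Set.Icc (-C) C := fun n =>
    ⟨le_max_left _ _, max_le (by linarith) ((min_le_left _ _))⟩
  have hle : (Ultrafilter.map u' ω : Filter ℝ) ≤ Filter.principal (Set.Icc (-C) C) := by
    rw [Filter.le_principal_iff]
    exact Filter.mem_map.2 (Filter.Eventually.of_forall fun n => hmem n)
  obtain ⟨a, -, ha⟩ := (isCompact_Icc (a := -C) (b := C)).ultrafilter_le_nhds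
    (Ultrafilter.map u' ω) hle
  have htu' : Filter.Tendsto u' (ω : Filter ℕ) (nhds a) := ha
  have heq : u' =ᶠ[(ω : Filter ℕ)] u := by
    filter_upwards [h] with n hn
    have h1 : -C ≤ u n := neg_le_of_abs_le hn
    have h2 : u n ≤ C := le_of_abs_le hn
    simp [hu', min_eq_right h2, max_eq_right h1]
  have htu : Filter.Tendsto u (ω : Filter ℕ) (nhds a) := htu'.congr' heq
  rwa [htu.limUnder_eq]

section Ultralimit

variable (Xs : ℕ → Type*) [∀ n, MetricSpace (Xs n)] (ω : Ultrafilter ℕ)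
  (b : ∀ n, Xs n) (l : ℕ → ℝ)

/-- A sequence of points `u n ∈ Xs n` whose rescaled distance to the basepoints is
bounded along `ω`. -/
structure BddSeq where
  seq : ∀ n, Xs n
  bdd : ∃ C : ℝ, ∀ᶠ n in (ω : Filter ℕ), dist (seq n) (b n) ≤ C * l n

variable (hl : ∀ᶠ n in (ω : Filter ℕ), 0 < l n)

/-- Two sequences represent the same point of the ultralimit when their rescaled
distance tends to zero along `ω`. -/
def ulimSetoid : Setoid (BddSeq Xs ω b l) where
  r u v := ∀ ε : ℝ, 0 < ε → ∀ᶠ n in (ω : Filter ℕ), dist (u.seq n) (v.seq n) ≤ ε * l n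
  iseqv := by
    refine ⟨fun u ε hε => ?_, fun {u v} h ε hε => ?_, fun {u v w} h h' ε hε => ?_⟩
    · filter_upwards [hl] with n hn
      simp [le_of_lt (mul_pos hε hn)]
    · filter_upwards [h ε hε] with n hn
      rwa [dist_comm]
    · filter_upwards [h (ε/2) (by linarith), h' (ε/2) (by linarith)] with n h1 h2
      calc dist (u.seq n) (w.seq n) ≤ dist (u.seq n) (v.seq n) + dist (v.seq n) (w.seq n) :=
            dist_triangle _ _ _
        _ ≤ ε/2 * l n + ε/2 * l n := add_le_add h1 h2
        _ = ε * l n := by ring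

/-- The ultralimit `ω-lim (Xs n, dist / l n, b n)` of a sequence of based metric spaces,
rescaled by the scaling constants `l`.  (Asymptotic cones are the special case of a
constant sequence of spaces with `l → ∞` along `ω`.) -/
def Ultralimit : Type _ := Quotient (ulimSetoid Xs ω b l hl)

variable {Xs ω b l}

theorem bddseq_dist_bdd (hl : ∀ᶠ n in (ω : Filter ℕ), 0 < l n) (x y : BddSeq Xs ω b l) :
    ∃ C : ℝ, ∀ᶠ n in (ω : Filter ℕ), |dist (x.seq n) (y.seq n) / l n| ≤ C := by
  obtain ⟨Cx, hCx⟩ := x.bdd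
  obtain ⟨Cy, hCy⟩ := y.bdd
  refine ⟨|Cx| + |Cy|, ?_⟩
  filter_upwards [hCx, hCy, hl] with n h1 h2 h3
  have hd : dist (x.seq n) (y.seq n) ≤ (|Cx| + |Cy|) * l n := by
    calc dist (x.seq n) (y.seq n) ≤ dist (x.seq n) (b n) + dist (y.seq n) (b n) :=
          dist_triangle_right _ _ _
      _ ≤ Cx * l n + Cy * l n := add_le_add h1 h2
      _ ≤ |Cx| * l n + |Cy| * l n := by
          gcongr <;> [exact le_abs_self Cx; exact le_abs_self Cy]
      _ = (|Cx| + |Cy|) * l n := by ring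
  rw [abs_div, abs_of_nonneg dist_nonneg, abs_of_pos h3, div_le_iff₀ h3]
  exact hd

variable {hl}

/-- The distance on the ultralimit: the `ω`-limit of rescaled distances. -/
def ulimDist (x y : Ultralimit Xs ω b l hl) : ℝ :=
  limUnder (ω : Filter ℕ) fun n => dist (x.out.seq n) (y.out.seq n) / l n

theorem ulimDist_tendsto (x y : Ultralimit Xs ω b l hl) :
    Filter.Tendsto (fun n => dist (x.out.seq n) (y.out.seq n) / l n) (ω : Filter ℕ)
      (nhds (ulimDist x y)) := by
  obtain ⟨C, hC⟩ := bddseq_dist_bdd hl x.out y.out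
  exact tendsto_limUnder_of_bdd ω hC

theorem ulimDist_self (x : Ultralimit Xs ω b l hl) : ulimDist x x = 0 := by
  unfold ulimDist
  have : (fun n => dist (x.out.seq n) (x.out.seq n) / l n) = fun _ => (0:ℝ) := by
    funext n; simp
  rw [this]
  exact Filter.Tendsto.limUnder_eq tendsto_const_nhds

theorem ulimDist_comm (x y : Ultralimit Xs ω b l hl) : ulimDist x y = ulimDist y x := by
  unfold ulimDist
  congr 1
  funext n
  rw [dist_comm]

theorem ulimDist_triangle (x y z : Ultralimit Xs ω b l hl) :
    ulimDist x z ≤ ulimDist x y + ulimDist y z := by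
  refine le_of_tendsto_of_tendsto (ulimDist_tendsto x z)
    ((ulimDist_tendsto x y).add (ulimDist_tendsto y z)) ?_
  filter_upwards [hl] with n hn
  rw [← add_div]
  gcongr
  exact dist_triangle _ _ _

theorem ulimDist_eq_zero {x y : Ultralimit Xs ω b l hl} (h : ulimDist x y = 0) : x = y := by
  have ht0 : Filter.Tendsto (fun n => dist (x.out.seq n) (y.out.seq n) / l n)
      (ω : Filter ℕ) (nhds 0) := h ▸ ulimDist_tendsto x y
  have hrel : (ulimSetoid Xs ω b l hl).r x.out y.out := by
    intro ε hε
    have := (Metric.tendsto_nhds.mp ht0) ε hε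
    filter_upwards [this, hl] with n h1 h2
    rw [Real.dist_eq, sub_zero, abs_div, abs_of_nonneg dist_nonneg, abs_of_pos h2,
      div_lt_iff₀ h2] at h1
    exact h1.le
  have : Quotient.mk (ulimSetoid Xs ω b l hl) x.out = Quotient.mk (ulimSetoid Xs ω b l hl) y.out :=
    Quot.sound hrel
  exact (Quotient.out_eq x).symm.trans (this.trans (Quotient.out_eq y))

/-- The ultralimit of a sequence of based metric spaces is a metric space. -/
instance ultralimitMetricSpace : MetricSpace (Ultralimit Xs ω b l hl) where
  dist := ulimDist
  dist_self := ulimDist_self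
  dist_comm := ulimDist_comm
  dist_triangle := ulimDist_triangle
  eq_of_dist_eq_zero := ulimDist_eq_zero

end Ultralimit
section Cones

variable (X : Type*) [MetricSpace X] (ω : Ultrafilter ℕ) (b : ℕ → X) (l : ℕ → ℝ)
  (hl : ∀ᶠ n in (ω : Filter ℕ), 0 < l n)

/-- The asymptotic cone `Cone_ω(X, b, l)`: the ultralimit of the based spaces
`(X, dist / l n, b n)`. -/
def AsymptoticCone : Type _ := Ultralimit (fun _ => X) ω b l hl

instance : MetricSpace (AsymptoticCone X ω b l hl) := ultralimitMetricSpace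

/-- The `ω`-limit of a sequence of subsets `A n ⊆ X` inside the asymptotic cone. -/
def ulimSet (A : ℕ → Set X) : Set (AsymptoticCone X ω b l hl) :=
  {x | ∃ u : BddSeq (fun _ => X) ω b l, Quotient.mk (ulimSetoid (fun _ => X) ω b l hl) u = x ∧
    ∀ᶠ n in (ω : Filter ℕ), u.seq n ∈ A n}

/-- The collection `𝓐_ω` of subsets of the asymptotic cone induced by a collection `𝓐`
of subsets of `X`: ultralimits of sequences in `𝓐` which stay at bounded rescaled
distance from the basepoints. -/
def coneFamily (𝓐 : Set (Set X)) : Set (Set (AsymptoticCone X ω b l hl)) :=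
  {A | ∃ An : ℕ → Set X, (∀ n, An n ∈ 𝓐) ∧
    (∃ C : ℝ, ∀ᶠ n in (ω : Filter ℕ), ∃ p ∈ An n, dist p (b n) ≤ C * l n) ∧
    A = ulimSet X ω b l hl An}

end Cones

/-! ## Tree-graded spaces and relative hyperbolicity -/

section TreeGraded

variable (Y : Type*) [MetricSpace Y]

/-- A simple geodesic triangle: a simple loop made of three geodesic segments. -/
def SimpleGeodesicTriangle (T : Set Y) : Prop :=
  ∃ (x y z : Y) (f g h : ℝ → Y),
    IsGeodesicSegment f x y ∧ IsGeodesicSegment g y z ∧ IsGeodesicSegment h z x ∧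
    T = f '' Set.Icc 0 (dist x y) ∪ g '' Set.Icc 0 (dist y z) ∪ h '' Set.Icc 0 (dist z x) ∧
    f '' Set.Icc 0 (dist x y) ∩ g '' Set.Icc 0 (dist y z) = {y} ∧
    g '' Set.Icc 0 (dist y z) ∩ h '' Set.Icc 0 (dist z x) = {z} ∧
    h '' Set.Icc 0 (dist z x) ∩ f '' Set.Icc 0 (dist x y) = {x}

/-- A complete geodesic space is tree-graded with respect to a collection `P` of closed
geodesic subsets (pieces) if distinct pieces meet in at most one point and every simple
geodesic triangle is contained in a single piece. -/
def IsTreeGraded (P : Set (Set Y)) : Prop :=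
  (∀ A ∈ P, IsClosed A ∧ IsGeodesicSubset A) ∧
  (∀ A ∈ P, ∀ B ∈ P, A ≠ B → (A ∩ B).Subsingleton) ∧
  (∀ T : Set Y, SimpleGeodesicTriangle Y T → ∃ A ∈ P, T ⊆ A)

end TreeGraded

/-- A metric space `X` is relatively hyperbolic with respect to a collection `𝓐` of
subsets if every asymptotic cone of `X` (over a nonprincipal ultrafilter, with scaling
constants tending to infinity along the ultrafilter) is tree-graded with respect to the
induced collection `𝓐_ω`. -/
def RelativelyHyperbolicSpace (X : Type*) [MetricSpace X] (𝓐 : Set (Set X)) : Prop :=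
  ∀ (ω : Ultrafilter ℕ), IsNonprincipal ω →
    ∀ (b : ℕ → X) (l : ℕ → ℝ) (hl : Filter.Tendsto l (ω : Filter ℕ) Filter.atTop),
      IsTreeGraded (AsymptoticCone X ω b l (hl.eventually (Filter.eventually_gt_atTop 0)))
        (coneFamily X ω b l (hl.eventually (Filter.eventually_gt_atTop 0)) 𝓐)
/-! ## Word metrics on groups -/

section WordMetric

variable {Γ : Type*} [Group Γ]

/-- The set of lengths of words over `S ∪ S⁻¹` representing `g`. -/
def wordLengthSet (S : Set Γ) (g : Γ) : Set ℕ :=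
  {n : ℕ | ∃ w : List Γ, w.length = n ∧ (∀ x ∈ w, x ∈ S ∨ x⁻¹ ∈ S) ∧ w.prod = g}

/-- The word length of `g` with respect to the generating set `S`. -/
def wordLength (S : Set Γ) (g : Γ) : ℕ := sInf (wordLengthSet S g)

theorem wordLengthSet_nonempty {S : Set Γ} (hS : Subgroup.closure S = ⊤) (g : Γ) :
    (wordLengthSet S g).Nonempty := by
  have hg : g ∈ Subgroup.closure S := hS ▸ Subgroup.mem_top g
  have hg' : g ∈ (Subgroup.closure S).toSubmonoid := hg
  rw [Subgroup.closure_toSubmonoid] at hg'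
  obtain ⟨w, hw, hprod⟩ := Submonoid.exists_list_of_mem_closure hg'
  refine ⟨w.length, w, rfl, fun x hx => ?_, hprod⟩
  rcases hw x hx with h | h
  · exact Or.inl h
  · exact Or.inr (Set.mem_inv.mp h)

theorem wordLength_one (S : Set Γ) : wordLength S 1 = 0 :=
  Nat.eq_zero_of_le_zero (Nat.sInf_le ⟨[], rfl, by simp, by simp⟩)

theorem wordLengthSet_inv_subset (S : Set Γ) (g : Γ) :
    wordLengthSet S g ⊆ wordLengthSet S g⁻¹ := by
  rintro n ⟨w, hlen, hmem, hprod⟩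
  refine ⟨(w.map fun x => x⁻¹).reverse, by simp [hlen], ?_, ?_⟩
  · intro x hx
    simp only [List.mem_reverse, List.mem_map] at hx
    obtain ⟨a, ha, rfl⟩ := hx
    rcases hmem a ha with h' | h'
    · exact Or.inr (by simpa using h')
    · exact Or.inl h'
  · rw [← List.prod_inv_reverse, hprod]

theorem wordLengthSet_inv (S : Set Γ) (g : Γ) :
    wordLengthSet S g⁻¹ = wordLengthSet S g := by
  refine le_antisymm ?_ (wordLengthSet_inv_subset S g)
  have := wordLengthSet_inv_subset S g⁻¹
  rwa [inv_inv] at this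

theorem wordLength_inv (S : Set Γ) (g : Γ) : wordLength S g⁻¹ = wordLength S g := by
  unfold wordLength
  rw [wordLengthSet_inv]

theorem wordLength_mul {S : Set Γ} (hS : Subgroup.closure S = ⊤) (g h : Γ) :
    wordLength S (g * h) ≤ wordLength S g + wordLength S h := by
  obtain ⟨w1, hlen1, hmem1, hprod1⟩ := Nat.sInf_mem (wordLengthSet_nonempty hS g)
  obtain ⟨w2, hlen2, hmem2, hprod2⟩ := Nat.sInf_mem (wordLengthSet_nonempty hS h)
  refine Nat.sInf_le ⟨w1 ++ w2, ?_, ?_, by simp [hprod1, hprod2]⟩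
  · rw [List.length_append, hlen1, hlen2]; rfl
  · intro x hx
    rcases List.mem_append.mp hx with h' | h'
    · exact hmem1 x h'
    · exact hmem2 x h'

/-- The word metric on a group `Γ`, with respect to a generating set `S`. -/
def wordMetricSpace (Γ : Type*) [Group Γ] (S : Set Γ)
    (hS : Subgroup.closure S = ⊤) : MetricSpace Γ where
  dist g h := (wordLength S (g⁻¹ * h) : ℝ)
  dist_self g := by simp [wordLength_one]
  dist_comm g h := by
    show (wordLength S (g⁻¹ * h) : ℝ) = (wordLength S (h⁻¹ * g) : ℝ)
    have := wordLength_inv S (g⁻¹ * h)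
    rw [mul_inv_rev, inv_inv] at this
    rw [← this]
  dist_triangle g k h := by
    show (wordLength S (g⁻¹ * h) : ℝ) ≤ (wordLength S (g⁻¹ * k) : ℝ) + (wordLength S (k⁻¹ * h) : ℝ)
    have := wordLength_mul hS (g⁻¹ * k) (k⁻¹ * h)
    have h2 : g⁻¹ * k * (k⁻¹ * h) = g⁻¹ * h := by group
    rw [h2] at this
    exact_mod_cast this
  eq_of_dist_eq_zero := by
    intro g h hd
    have hd' : (wordLength S (g⁻¹ * h) : ℝ) = 0 := hd
    have h0 : wordLength S (g⁻¹ * h) = 0 := by exact_mod_cast hd'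
    rcases (Nat.sInf_eq_zero.mp h0) with h1 | h1
    · obtain ⟨w, hlen, -, hprod⟩ := h1
      have hw : w = [] := List.length_eq_zero_iff.mp hlen
      rw [hw] at hprod
      simp only [List.prod_nil] at hprod
      exact (inv_mul_eq_one.mp hprod.symm)
    · exact absurd h1 (wordLengthSet_nonempty hS _).ne_empty

end WordMetric
/-! ## Relatively hyperbolic groups (Bowditch, via the Druţu–Sapir characterization) -/

/-- A subgroup is virtually abelian of rank at least two if it contains a finite-index
free abelian subgroup of rank at least two. -/
def IsVirtuallyAbelianOfRankAtLeastTwo {Γ : Type*} [Group Γ] (P : Subgroup Γ) : Prop :=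
  ∃ H : Subgroup Γ, H ≤ P ∧ H.relIndex P ≠ 0 ∧
    ∃ k : ℕ, 2 ≤ k ∧ Nonempty (H ≃* Multiplicative (Fin k → ℤ))

/-- A subgroup is virtually abelian if it contains an abelian subgroup of finite index. -/
def IsVirtuallyAbelian {Γ : Type*} [Group Γ] (H : Subgroup Γ) : Prop :=
  ∃ A : Subgroup Γ, A ≤ H ∧ A.relIndex H ≠ 0 ∧ ∀ a ∈ A, ∀ b ∈ A, a * b = b * a

/-- The left coset `gP` of a subgroup, as a subset of the group. -/
def leftCosetSet {Γ : Type*} [Group Γ] (g : Γ) (P : Subgroup Γ) : Set Γ :=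
  {x : Γ | ∃ p ∈ P, x = g * p}

/-- `Γ` is a relatively hyperbolic group with respect to a collection of virtually abelian
subgroups of rank at least two: equipped with a word metric, `Γ` is relatively hyperbolic
as a metric space with respect to the left cosets of the subgroups. -/
def GroupRelHypVirtAbelian (Γ : Type*) [Group Γ] : Prop :=
  ∃ (S : Finset Γ) (hS : Subgroup.closure (S : Set Γ) = ⊤) (𝓐 : Set (Subgroup Γ)),
    (∀ P ∈ 𝓐, IsVirtuallyAbelianOfRankAtLeastTwo P) ∧
    @RelativelyHyperbolicSpace Γ (wordMetricSpace Γ (S : Set Γ) hS)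
      {B : Set Γ | ∃ (g : Γ) (P : Subgroup Γ), P ∈ 𝓐 ∧ B = leftCosetSet g P}

/-- `X` is relatively hyperbolic with respect to some family of flats. -/
def RelHypWrtFlats (X : Type*) [MetricSpace X] : Prop :=
  ∃ 𝓕 : Set (Set X), (∀ F ∈ 𝓕, IsFlat F) ∧ RelativelyHyperbolicSpace X 𝓕

/-! ## The space of flats, (IF1), parallel sets -/

/-- The set of all flats in `X`. -/
abbrev Flats (X : Type*) [MetricSpace X] := {F : Set X // IsFlat F}

/-- The topology of Hausdorff convergence on bounded sets on the space of flats of `X`. -/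
def flatsTopology (X : Type*) [MetricSpace X] : TopologicalSpace (Flats X) :=
  TopologicalSpace.generateFrom
    {U : Set (Flats X) | ∃ (C₀ : Set X) (x₀ : X) (r ε : ℝ), 0 < r ∧ 0 < ε ∧
      U = {C : Flats X | EMetric.hausdorffEdist (C.1 ∩ Metric.closedBall x₀ r)
            (C₀ ∩ Metric.closedBall x₀ r) < ENNReal.ofReal ε}}

/-- Formulation (IF1) of isolated flats: there is a `Γ`-invariant family `𝓕` of flats
that is closed and isolated in the space of flats, and every flat of `X` lies in a
uniformly bounded tubular neighborhood of a member of `𝓕`. -/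
def HasIF1 (Γ X : Type*) [Group Γ] [MetricSpace X] [MulAction Γ X] : Prop :=
  ∃ 𝓕 : Set (Set X),
    (∀ F ∈ 𝓕, IsFlat F) ∧
    (∀ (g : Γ), ∀ F ∈ 𝓕, g • F ∈ 𝓕) ∧
    @IsClosed (Flats X) (flatsTopology X) {F : Flats X | F.1 ∈ 𝓕} ∧
    (∀ F : Flats X, F.1 ∈ 𝓕 → ∃ U : Set (Flats X), @IsOpen (Flats X) (flatsTopology X) U ∧
      U ∩ {F' : Flats X | F'.1 ∈ 𝓕} = {F}) ∧
    ∃ D : ℝ, ∀ F : Set X, IsFlat F → ∃ F' ∈ 𝓕, F ⊆ Metric.cthickening D F'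

/-- The parallel set of a geodesic line `c`: the union of all geodesic lines at finite
Hausdorff distance from `c`. -/
def parallelSet {X : Type*} [MetricSpace X] (c : ℝ → X) : Set X :=
  {x : X | ∃ c' : ℝ → X, IsGeodesicLine c' ∧
    EMetric.hausdorffEdist (Set.range c) (Set.range c') ≠ ⊤ ∧ x ∈ Set.range c'}

/-- `X` has thin parallel sets: the parallel set of every geodesic line in a maximal flat
`F` lies in a finite tubular neighborhood of `F`. -/
def HasThinParallelSets (X : Type*) [MetricSpace X] : Prop :=
  ∀ c : ℝ → X, IsGeodesicLine c → ∀ F : Set X, IsMaximalFlat F → Set.range c ⊆ F →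
    ∃ r : ℝ, parallelSet c ⊆ Metric.cthickening r F

/-- `X` has uniformly thin parallel sets: thin parallel sets with a uniform bound on the
thickness of the tubular neighborhoods. -/
def HasUniformlyThinParallelSets (X : Type*) [MetricSpace X] : Prop :=
  ∃ r : ℝ, ∀ c : ℝ → X, IsGeodesicLine c → ∀ F : Set X, IsMaximalFlat F → Set.range c ⊆ F →
    parallelSet c ⊆ Metric.cthickening r F

/-- `X` has slim parallel sets: the Tits boundary of the parallel set of every geodesic
line in a maximal flat `F` equals the Tits boundary of `F`. -/
def HasSlimParallelSets (X : Type*) [MetricSpace X] : Prop :=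
  ∀ c : ℝ → X, IsGeodesicLine c → ∀ F : Set X, IsMaximalFlat F → Set.range c ⊆ F →
    boundaryOfSet (parallelSet c) = boundaryOfSet F

/-! ## Quasi-isometric embeddings, quasigeodesics, fellow travelling -/

/-- An `(L,C)`-quasi-isometric embedding. -/
def QIEmbedding {Y X : Type*} [MetricSpace Y] [MetricSpace X] (L C : ℝ) (f : Y → X) : Prop :=
  ∀ y y' : Y, (1/L) * dist y y' - C ≤ dist (f y) (f y') ∧
    dist (f y) (f y') ≤ L * dist y y' + C

/-- A `(λ,ε)`-quasigeodesic, defined on the interval `[0,a]`. -/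
def Quasigeodesic {X : Type*} [MetricSpace X] (lam eps : ℝ) (α : ℝ → X) (a : ℝ) : Prop :=
  ∀ s ∈ Set.Icc (0:ℝ) a, ∀ t ∈ Set.Icc (0:ℝ) a,
    (1/lam) * |s - t| - eps ≤ dist (α s) (α t) ∧ dist (α s) (α t) ≤ lam * |s - t| + eps

/-- Two paths `α : [0,a] → X` and `α' : [0,a'] → X` `L`-fellow travel relative to a
sequence of flats. -/
def FellowTravelRelFlats {X : Type*} [MetricSpace X] (L : ℝ) (α α' : ℝ → X)
    (a a' : ℝ) : Prop :=
  ∃ (n : ℕ) (Fs : Fin n → Set X), (∀ i, IsFlat (Fs i)) ∧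
  ∃ t s t' s' : Fin (n+1) → ℝ,
    t 0 = 0 ∧ s (Fin.last n) = a ∧ t' 0 = 0 ∧ s' (Fin.last n) = a' ∧
    (∀ i : Fin (n+1), t i ≤ s i) ∧ (∀ i : Fin n, s i.castSucc ≤ t i.succ) ∧
    (∀ i : Fin (n+1), t' i ≤ s' i) ∧ (∀ i : Fin n, s' i.castSucc ≤ t' i.succ) ∧
    (∀ i : Fin (n+1),
      Metric.hausdorffDist (α '' Set.Icc (t i) (s i)) (α' '' Set.Icc (t' i) (s' i)) ≤ L) ∧
    (∀ i : Fin n,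
      α '' Set.Icc (s i.castSucc) (t i.succ) ⊆ Metric.cthickening L (Fs i) ∧
      α' '' Set.Icc (s' i.castSucc) (t' i.succ) ⊆ Metric.cthickening L (Fs i))

/-! ## Quasiconvex and undistorted subgroups -/

/-- A quasiconvex subset of a geodesic space: all geodesics between its points stay in a
bounded neighborhood of it. -/
def QuasiconvexSubset {X : Type*} [MetricSpace X] (Y : Set X) : Prop :=
  ∃ κ : ℝ, ∀ x ∈ Y, ∀ y ∈ Y, ∀ f : ℝ → X, IsGeodesicSegment f x y →
    ∀ t ∈ Set.Icc (0:ℝ) (dist x y), f t ∈ Metric.cthickening κ Y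

/-- The orbit of a point under a subgroup. -/
def orbitSet {Γ X : Type*} [Group Γ] [MulAction Γ X] (H : Subgroup Γ) (x₀ : X) : Set X :=
  {x : X | ∃ h ∈ H, x = h • x₀}

/-- A subgroup `H ≤ Γ` is undistorted: the inclusion is a quasi-isometric embedding with
respect to word metrics. -/
def UndistortedSubgroup {Γ : Type*} [Group Γ] (H : Subgroup Γ) : Prop :=
  ∃ (S : Finset Γ) (T : Finset H),
    Subgroup.closure (S : Set Γ) = ⊤ ∧ Subgroup.closure (T : Set H) = ⊤ ∧
    ∃ L C : ℝ, 0 < L ∧ 0 ≤ C ∧ ∀ h h' : H,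
      (1/L) * (wordLength ((T : Set H)) (h⁻¹ * h') : ℝ) - C ≤
          (wordLength ((S : Set Γ)) ((h : Γ)⁻¹ * (h' : Γ)) : ℝ) ∧
        (wordLength ((S : Set Γ)) ((h : Γ)⁻¹ * (h' : Γ)) : ℝ) ≤
          L * (wordLength ((T : Set H)) (h⁻¹ * h') : ℝ) + C
/-! ## Biautomatic groups -/

section Biautomatic

variable {Γ : Type*} [Group Γ]

/-- The group element represented by a word in the generators. -/
def wordProd {A : Finset Γ} (w : List {x : Γ // x ∈ A}) : Γ :=
  (w.map Subtype.val).prod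

/-- The path in `Γ` traced out by a word: at time `n` it is at the product of the first
`n` letters. -/
def wordPath {A : Finset Γ} (w : List {x : Γ // x ∈ A}) (n : ℕ) : Γ :=
  ((w.map Subtype.val).take n).prod

/-- A group is biautomatic if it admits a finite generating set `A` and a regular
language `L` over `A` surjecting onto the group, whose paths satisfy the two-sided
`k`-fellow traveller property. -/
def Biautomatic (Γ : Type*) [Group Γ] : Prop :=
  ∃ A : Finset Γ, Subgroup.closure (A : Set Γ) = ⊤ ∧
    ∃ L : Language {x : Γ // x ∈ A}, L.IsRegular ∧
      (∀ g : Γ, ∃ w ∈ L, wordProd w = g) ∧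
      ∃ k : ℕ, ∀ (a : {x : Γ // x ∈ A}) (u v : List {x : Γ // x ∈ A}),
        u ∈ L → v ∈ L →
        (wordProd u = wordProd v * a.1 →
          ∀ n : ℕ, wordLength (A : Set Γ) ((wordPath u n)⁻¹ * wordPath v n) ≤ k) ∧
        (wordProd u = a.1 * wordProd v →
          ∀ n : ℕ, wordLength (A : Set Γ) ((wordPath u n)⁻¹ * (a.1 * wordPath v n)) ≤ k)

end Biautomatic

/-! ## The cone topology on the ideal boundary, and the boundary action -/

/-- The topology of uniform convergence on compact sets on the space of geodesic rays
(since rays are `1`-Lipschitz this coincides with the topology of pointwise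
convergence). -/
def raysTopology (X : Type*) [MetricSpace X] : TopologicalSpace (GeodesicRays X) :=
  TopologicalSpace.induced (fun c : GeodesicRays X => (c.1 : ℝ → X)) Pi.topologicalSpace

/-- The cone topology on the ideal boundary of a proper CAT(0) space: the quotient of the
topology of uniform convergence on compact sets on the space of geodesic rays. -/
def coneTopologyBoundary (X : Type*) [MetricSpace X] : TopologicalSpace (IdealBoundary X) :=
  TopologicalSpace.coinduced (Quotient.mk (asympSetoid X)) (raysTopology X)

/-- The induced action of an isometric group action on the ideal boundary. -/
def boundarySMul {Γ X : Type*} [Group Γ] [MetricSpace X] [MulAction Γ X]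
    (hiso : ∀ g : Γ, Isometry fun x : X => g • x) (g : Γ) :
    IdealBoundary X → IdealBoundary X :=
  Quotient.lift
    (fun c : GeodesicRays X => Quotient.mk (asympSetoid X)
      (⟨fun t => g • c.1 t, fun s t hs ht => by
        simpa using (hiso g).dist_eq (c.1 s) (c.1 t) ▸ c.2 s t hs ht⟩ : GeodesicRays X))
    (by
      rintro c c' ⟨K, hK⟩
      apply Quot.sound
      exact ⟨K, fun t ht => by
        simpa using ((hiso g).dist_eq (c.1 t) (c'.1 t)) ▸ hK t ht⟩)

/-! ## Flat half-planes and flat sectors -/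

/-- A flat half-plane meeting `F` orthogonally: an isometrically embedded Euclidean
half-plane whose boundary line lies in `F` and which leaves `F` at angle `π/2`. -/
def FlatHalfPlaneOrthogonal {Y : Type*} [MetricSpace Y] (F : Set Y) : Prop :=
  ∃ h : {v : EuclideanSpace ℝ (Fin 2) // 0 ≤ v 1} → Y,
    Isometry h ∧
    (∀ v : {v : EuclideanSpace ℝ (Fin 2) // 0 ≤ v 1}, v.1 1 = 0 → h v ∈ F) ∧
    ∀ (v : {v : EuclideanSpace ℝ (Fin 2) // 0 ≤ v 1}) (hv : v.1 1 = 0),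
      ∀ y ∈ F, y ≠ h v → ∀ t : ℝ, ∀ ht : 0 < t,
        angle (h v) (h ⟨(v.1 + EuclideanSpace.single 1 t : EuclideanSpace ℝ (Fin 2)), by
          have h1 : (v.1 + EuclideanSpace.single 1 t : EuclideanSpace ℝ (Fin 2)) 1
              = v.1 1 + t := by
            simp [EuclideanSpace.single_apply]
          rw [h1, hv, zero_add]; exact ht.le⟩) y = π / 2

/-- The model Euclidean sector of angle `θ`: the convex region of `E²` bounded by two rays
from the origin making angle `θ`. -/
def modelSector (θ : ℝ) : Set (EuclideanSpace ℝ (Fin 2)) :=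
  {v | ∃ r φ : ℝ, 0 ≤ r ∧ 0 ≤ φ ∧ φ ≤ θ ∧ v 0 = r * Real.cos φ ∧ v 1 = r * Real.sin φ}

/-- A flat sector of angle `θ` in `X`: an isometrically embedded copy of the model
Euclidean sector of angle `θ`. -/
def IsFlatSector {X : Type*} [MetricSpace X] (θ : ℝ) (S : Set X) : Prop :=
  ∃ f : {v : EuclideanSpace ℝ (Fin 2) // v ∈ modelSector θ} → X,
    Isometry f ∧ Set.range f = S

/-! ## The space of directions at a point -/

section Directions

variable {Y : Type*} [MetricSpace Y]

/-- Two points determine the same direction at `p` when the angle at `p` between them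
vanishes.  (In a CAT(0) space this relation is already an equivalence relation; we take
the generated equivalence relation.) -/
def dirSetoid (p : Y) : Setoid {z : Y // z ≠ p} :=
  Relation.EqvGen.setoid (fun q q' => angle p q.1 q'.1 = 0)

/-- The space of directions at `p`: germs at `p` of geodesics emanating from `p`. -/
def SpaceOfDirections (p : Y) := Quotient (dirSetoid p)

/-- The direction at `p` pointing towards `y`. -/
def dirOf (p : Y) (y : Y) (h : y ≠ p) : SpaceOfDirections p :=
  Quotient.mk (dirSetoid p) ⟨y, h⟩

/-- The angle between two directions at `p`. -/
def dirAngle {p : Y} (d d' : SpaceOfDirections p) : ℝ :=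
  angle p d.out.1 d'.out.1

/-- The topology on the space of directions induced by the angle metric. -/
def dirTopology (p : Y) : TopologicalSpace (SpaceOfDirections p) :=
  TopologicalSpace.generateFrom
    {U | ∃ (d : SpaceOfDirections p) (ε : ℝ), U = {d' | dirAngle d d' < ε}}

/-- `Σ_p F`: the set of directions at `p` pointing into a subset `F`. -/
def dirSet (p : Y) (F : Set Y) : Set (SpaceOfDirections p) :=
  {d | ∃ (q : Y) (hq : q ≠ p), q ∈ F ∧ dirOf p q hq = d}

end Directions

/-!
Upper semicontinuity of the angle along `ω` is soft: a comparison angle at `x` that is close to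
`∠_x(y, z)` is a limit of comparison angles in the spaces `X_k`, and these bound the angles from
above; here Stewart's inequality, which passes to the limit, shows that every point of a geodesic
`[x, y]` of `X` is represented by points of `[x_k, y_k]`. Lower semicontinuity fails for arbitrary
base points, because the infimum defining `∠_{x_k}(y_k, z_k)` may be approached only at scales
tending to `0`. The remedy is to move `x_k` slightly along `[x_k, y_k]`. A diagonal argument
produces `x'_k` for which the comparison angle at `x_k` between `x'_k` and `z_k` is asymptotically
at least `∠_x(y, z)`. The three comparison angles of the triangle `x_k, x'_k, z_k` add up to `π`,
and the angle at `x'_k` between `x_k` and `y_k` is `π`, so the exterior angle `∠_{x'_k}(y_k, z_k)`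
dominates that comparison angle. Replacing `y_k` and `z_k` by `y'_k` and `z'_k` costs only
comparison angles that tend to `0`.
-/

section Segments

variable [MetricSpace X] {p x y x' y' m v : X}

lemma right_mem_geodesicSegSet (p x : X) : x ∈ geodesicSegSet p x := by
  simp [geodesicSegSet]

lemma mem_geodesicSegSet_comm : m ∈ geodesicSegSet p x ↔ m ∈ geodesicSegSet x p := by
  simp only [geodesicSegSet, mem_ofPred_eq, dist_comm, add_comm]

lemma dist_le_of_mem_geodesicSegSet (hm : m ∈ geodesicSegSet p x) : dist p m ≤ dist p x :=
  (le_add_of_nonneg_right dist_nonneg).trans_eq hm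

lemma eq_of_mem_geodesicSegSet_self (hm : m ∈ geodesicSegSet p p) : m = p := by
  have hpm : dist p m ≤ 0 := (dist_le_of_mem_geodesicSegSet hm).trans_eq (dist_self p)
  exact (dist_le_zero.1 hpm).symm

lemma ne_of_mem_geodesicSegSet_of_ne (hm : m ∈ geodesicSegSet p x) (hmp : m ≠ p) : x ≠ p := by
  rintro rfl
  exact hmp (eq_of_mem_geodesicSegSet_self hm)

lemma geodesicSegSet_subset (hm : m ∈ geodesicSegSet p x) :
    geodesicSegSet p m ⊆ geodesicSegSet p x := by
  intro v hv
  have hpvm : dist p v + dist v m = dist p m := hv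
  have hpmx : dist p m + dist m x = dist p x := hm
  refine le_antisymm ?_ (dist_triangle p v x)
  linarith [dist_triangle v m x]

lemma mem_geodesicSegSet_of_mem_of_mem (hp : p ∈ geodesicSegSet x y)
    (hx' : x' ∈ geodesicSegSet p x) (hy' : y' ∈ geodesicSegSet p y) :
    p ∈ geodesicSegSet x' y' := by
  have hxpy : dist x p + dist p y = dist x y := hp
  have hpx'x : dist p x' + dist x' x = dist p x := hx'
  have hpy'y : dist p y' + dist y' y = dist p y := hy'
  refine le_antisymm ?_ (dist_triangle x' p y')
  linarith [dist_triangle4 x x' y' y, dist_comm x p, dist_comm x' x, dist_comm x' p]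

namespace IsGeodesicSegment

variable {f : ℝ → X} {t : ℝ}

lemma dist_left (hf : IsGeodesicSegment f p x) (ht : t ∈ Icc 0 (dist p x)) :
    dist p (f t) = t := by
  have h := hf.2.2 0 ⟨le_rfl, dist_nonneg⟩ t ht
  rwa [hf.1, zero_sub, abs_neg, abs_of_nonneg ht.1] at h

lemma dist_right (hf : IsGeodesicSegment f p x) (ht : t ∈ Icc 0 (dist p x)) :
    dist (f t) x = dist p x - t := by
  have h := hf.2.2 t ht (dist p x) ⟨dist_nonneg, le_rfl⟩
  rwa [hf.2.1, abs_sub_comm, abs_of_nonneg (sub_nonneg.2 ht.2)] at h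

lemma mem_geodesicSegSet (hf : IsGeodesicSegment f p x) (ht : t ∈ Icc 0 (dist p x)) :
    f t ∈ geodesicSegSet p x := by
  simp only [geodesicSegSet, mem_ofPred_eq, hf.dist_left ht, hf.dist_right ht, add_sub_cancel]

lemma continuousOn (hf : IsGeodesicSegment f p x) : ContinuousOn f (Icc 0 (dist p x)) := by
  refine (LipschitzOnWith.of_dist_le_mul (K := 1) fun s hs t ht => ?_).continuousOn
  rw [hf.2.2 s hs t ht, NNReal.coe_one, one_mul, Real.dist_eq]

end IsGeodesicSegment

lemma GeodesicSpace.exists_mem_geodesicSegSet_dist_eq (hX : GeodesicSpace X) {r : ℝ}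
    (hr : r ∈ Icc 0 (dist p x)) : ∃ m ∈ geodesicSegSet p x, dist p m = r := by
  obtain ⟨f, hf⟩ := hX p x
  exact ⟨f r, hf.mem_geodesicSegSet hr, hf.dist_left hr⟩

end Segments

section Stewart

lemma nonpos_of_midpoint_convex {a b : ℝ} {h : ℝ → ℝ} (hcont : ContinuousOn h (Icc a b))
    (hmid : ∀ u ∈ Icc a b, ∀ v ∈ Icc a b, h ((u + v) / 2) ≤ (h u + h v) / 2)
    (ha : h a ≤ 0) (hb : h b ≤ 0) {t : ℝ} (ht : t ∈ Icc a b) : h t ≤ 0 := by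
  have hab : a ≤ b := ht.1.trans ht.2
  obtain ⟨s, ⟨has, hsb⟩, hmax⟩ := isCompact_Icc.exists_isMaxOn ⟨t, ht⟩ hcont
  refine (hmax ht).trans ?_
  -- The maximum point is the midpoint of an endpoint and its reflection in the maximum point.
  rcases le_total s ((a + b) / 2) with hs | hs
  · have hmem : 2 * s - a ∈ Icc a b := ⟨by linarith, by linarith⟩
    have hle := hmid a (left_mem_Icc.2 hab) (2 * s - a) hmem
    rw [add_sub_cancel, mul_div_cancel_left₀ s two_ne_zero] at hle
    linarith [show h (2 * s - a) ≤ h s from hmax hmem]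
  · have hmem : 2 * s - b ∈ Icc a b := ⟨by linarith, by linarith⟩
    have hle := hmid b (right_mem_Icc.2 hab) (2 * s - b) hmem
    rw [add_sub_cancel, mul_div_cancel_left₀ s two_ne_zero] at hle
    linarith [show h (2 * s - b) ≤ h s from hmax hmem]

variable [MetricSpace X] {p x y m v z : X}

/-- Stewart's inequality for a point `m` of `[p, x]`: the cevian from `z` to `m` is at most as long
as the corresponding one in the Euclidean comparison triangle of `p, x, z`, whose length is given
by Stewart's theorem.  It is written without division so that `p = x` needs no special case. -/
def StewartInequality (p x m z : X) : Prop :=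
  dist p x * dist z m ^ 2 ≤
    dist m x * dist z p ^ 2 + dist p m * dist z x ^ 2 - dist p m * dist m x * dist p x

lemma StewartInequality.eq_of_dist_eq (h : StewartInequality p x m v)
    (hm : m ∈ geodesicSegSet p x) (hv : v ∈ geodesicSegSet p x) (hd : dist p v = dist p m) :
    v = m := by
  have hm' : dist p m + dist m x = dist p x := hm
  have hv' : dist p v + dist v x = dist p x := hv
  have hvx : dist v x = dist m x := by linarith
  rcases eq_or_ne p x with rfl | hpx
  · rw [eq_of_mem_geodesicSegSet_self hm, eq_of_mem_geodesicSegSet_self hv]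
  · unfold StewartInequality at h
    rw [dist_comm v p, hd, hvx, ← hm'] at h
    have hle : (dist p m + dist m x) * dist v m ^ 2 ≤ 0 := by linarith
    have hsq : dist v m ^ 2 ≤ 0 := nonpos_of_mul_nonpos_right hle (hm' ▸ dist_pos.2 hpx)
    exact dist_eq_zero.1 (sq_nonpos_iff _ |>.1 hsq)

namespace CAT0Space

variable (hX : CAT0Space X)

include hX

lemma stewartInequality_of_isGeodesicSegment {f : ℝ → X} (hf : IsGeodesicSegment f p x) {t : ℝ}
    (ht : t ∈ Icc 0 (dist p x)) (z : X) : StewartInequality p x (f t) z := by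
  set d := dist p x with hd
  have hcont : ContinuousOn (fun s => d * dist z (f s) ^ 2
      - ((d - s) * dist z p ^ 2 + s * dist z x ^ 2 - s * (d - s) * d)) (Icc 0 d) := by
    have := hf.continuousOn
    fun_prop
  have h := nonpos_of_midpoint_convex hcont ?_ ?_ ?_ ht
  · rw [StewartInequality, hf.dist_left ht, hf.dist_right ht, ← hd]
    linarith
  · intro u hu v hv
    have hm : (u + v) / 2 ∈ Icc 0 d := ⟨by linarith [hu.1, hv.1], by linarith [hu.2, hv.2]⟩
    have hCN := hX.2 z (f u) (f v) (f ((u + v) / 2))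
    rw [hf.2.2 u hu _ hm, hf.2.2 v hv _ hm, hf.2.2 u hu v hv, sq_abs,
      show u - (u + v) / 2 = (u - v) / 2 by ring, show v - (u + v) / 2 = -((u - v) / 2) by ring,
      abs_neg, abs_div, abs_two] at hCN
    have := mul_le_mul_of_nonneg_left (hCN rfl rfl) (dist_nonneg : 0 ≤ d)
    linarith
  · rw [hf.1]
    linarith
  · rw [hf.2.1]
    linarith

lemma eq_of_mem_geodesicSegSet_of_dist_eq (hm : m ∈ geodesicSegSet p x)
    (hv : v ∈ geodesicSegSet p x) (hd : dist p v = dist p m) : v = m := by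
  obtain ⟨f, hf⟩ := hX.1 p x
  have ht : dist p m ∈ Icc 0 (dist p x) := ⟨dist_nonneg, dist_le_of_mem_geodesicSegSet hm⟩
  have eq_f {w : X} (hw : w ∈ geodesicSegSet p x) (hwm : dist p w = dist p m) :
      w = f (dist p m) :=
    (hX.stewartInequality_of_isGeodesicSegment hf ht w).eq_of_dist_eq
      (hf.mem_geodesicSegSet ht) hw (hwm.trans (hf.dist_left ht).symm)
  exact (eq_f hv hd).trans (eq_f hm rfl).symm

lemma stewartInequality (hm : m ∈ geodesicSegSet p x) (z : X) : StewartInequality p x m z := by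
  obtain ⟨f, hf⟩ := hX.1 p x
  have ht : dist p m ∈ Icc 0 (dist p x) := ⟨dist_nonneg, dist_le_of_mem_geodesicSegSet hm⟩
  rw [hX.eq_of_mem_geodesicSegSet_of_dist_eq (hf.mem_geodesicSegSet ht) hm (hf.dist_left ht).symm]
  exact hX.stewartInequality_of_isGeodesicSegment hf ht z

lemma mem_geodesicSegSet_of_dist_le (hm : m ∈ geodesicSegSet p x) (hv : v ∈ geodesicSegSet p x)
    (hle : dist p v ≤ dist p m) : v ∈ geodesicSegSet p m := by
  obtain ⟨w, hw, hpw⟩ := hX.1.exists_mem_geodesicSegSet_dist_eq ⟨dist_nonneg, hle⟩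
  rwa [hX.eq_of_mem_geodesicSegSet_of_dist_eq (geodesicSegSet_subset hm hw) hv hpw.symm]

end CAT0Space

end Stewart

section ComparisonAngles

/-- The side opposite the angle `θ` in the Euclidean triangle whose two other sides are `a` and
`b`.  It lets angle comparisons in `X` be carried out as length comparisons in the plane. -/
def hinge (a b θ : ℝ) : ℝ :=
  √(a ^ 2 + b ^ 2 - 2 * a * b * cos θ)

section Hinge

variable {a b α β : ℝ}

lemma hinge_comm (a b θ : ℝ) : hinge a b θ = hinge b a θ := by
  unfold hinge
  ring_nf

lemma hinge_strictMonoOn (ha : 0 < a) (hb : 0 < b) : StrictMonoOn (hinge a b) (Icc 0 π) := by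
  intro θ hθ φ hφ hlt
  have hab : 0 < a * b := mul_pos ha hb
  have hcos : a * b * cos φ < a * b * cos θ :=
    mul_lt_mul_of_pos_left (strictAntiOn_cos hθ hφ hlt) hab
  have hθ1 : a * b * cos θ ≤ a * b := mul_le_of_le_one_right hab.le (cos_le_one θ)
  exact sqrt_lt_sqrt (by linarith [sq_nonneg (a - b)]) (by linarith)

-- With the cevian on the horizontal axis, the two sides of the hinge end at `(a cos α, a sin α)`
-- and `(b cos β, -b sin β)`, and the segment joining these points meets the axis at the end of the
-- cevian.
lemma hinge_cevian (hα : 0 ≤ a * sin α) (hS : 0 < a * sin α + b * sin β) :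
    hinge a (a * b * sin (α + β) / (a * sin α + b * sin β)) α =
      a * sin α / (a * sin α + b * sin β) * hinge a b (α + β) := by
  set S := a * sin α + b * sin β with hS_def
  set t := a * b * sin (α + β) / S with ht
  set μ := a * sin α / S with hμ
  have h_horizontal : a * cos α - t = μ * (a * cos α - b * cos β) := by
    rw [ht, hμ, sin_add]
    field_simp
    rw [hS_def]
    ring
  have h_vertical : a * sin α = μ * S := (div_mul_cancel₀ _ hS.ne').symm
  have hsq : a ^ 2 + t ^ 2 - 2 * a * t * cos α =
      μ ^ 2 * (a ^ 2 + b ^ 2 - 2 * a * b * cos (α + β)) := by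
    calc a ^ 2 + t ^ 2 - 2 * a * t * cos α
        = (a * cos α - t) ^ 2 + (a * sin α) ^ 2 := by
          linear_combination (-a ^ 2) * sin_sq_add_cos_sq α
      _ = μ ^ 2 * ((a * cos α - b * cos β) ^ 2 + S ^ 2) := by
          rw [h_horizontal, h_vertical]
          ring
      _ = μ ^ 2 * (a ^ 2 + b ^ 2 - 2 * a * b * cos (α + β)) := by
          rw [cos_add, hS_def]
          linear_combination μ ^ 2 * a ^ 2 * sin_sq_add_cos_sq α +
            μ ^ 2 * b ^ 2 * sin_sq_add_cos_sq β
  rw [hinge, hsq, sqrt_mul (sq_nonneg μ), sqrt_sq (div_nonneg hα hS.le), hinge]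

lemma exists_hinge_add_hinge_eq (ha : 0 < a) (hb : 0 < b) (hα : 0 < α) (hβ : 0 < β)
    (hαβ : α + β < π) :
    ∃ t, 0 < t ∧ t ≤ max a b ∧ hinge a t α + hinge t b β = hinge a b (α + β) := by
  have hsα : 0 < a * sin α := mul_pos ha (sin_pos_of_pos_of_lt_pi hα (by linarith))
  have hsβ : 0 < b * sin β := mul_pos hb (sin_pos_of_pos_of_lt_pi hβ (by linarith))
  have hsαβ : 0 < sin (α + β) := sin_pos_of_pos_of_lt_pi (by linarith) hαβ
  have hS : 0 < a * sin α + b * sin β := add_pos hsα hsβ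
  refine ⟨a * b * sin (α + β) / (a * sin α + b * sin β), by positivity, ?_, ?_⟩
  · rw [div_le_iff₀ hS]
    calc a * b * sin (α + β)
        = a * sin α * (b * cos β) + b * sin β * (a * cos α) := by
          rw [sin_add]
          ring
      _ ≤ a * sin α * max a b + b * sin β * max a b := by
          gcongr
          · exact (mul_le_of_le_one_right hb.le (cos_le_one β)).trans (le_max_right a b)
          · exact (mul_le_of_le_one_right ha.le (cos_le_one α)).trans (le_max_left a b)
      _ = max a b * (a * sin α + b * sin β) := by ring
  · have hright := hinge_cevian (a := b) (b := a) hsβ.le (by linarith : 0 < b * sin β + a * sin α)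
    rw [add_comm (b * sin β), add_comm β, mul_comm b a, hinge_comm b, hinge_comm b] at hright
    rw [hinge_cevian hsα.le hS, hright, ← add_mul, ← add_div, div_self hS.ne', one_mul]

end Hinge

variable [MetricSpace X] {p x y z x' y' : X} {θ : ℝ}

lemma cangle_comm (p x y : X) : cangle p x y = cangle p y x := by
  rw [cangle, cangle, dist_comm x y]
  ring_nf

lemma cangle_self (hx : x ≠ p) : cangle p x x = 0 := by
  have hpx : dist p x ≠ 0 := dist_ne_zero.2 hx.symm
  rw [cangle, dist_self, arccos_eq_zero]
  field_simp
  norm_num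

lemma dist_eq_hinge_cangle (hx : x ≠ p) (hy : y ≠ p) :
    dist x y = hinge (dist p x) (dist p y) (cangle p x y) := by
  have hpx : 0 < dist p x := dist_pos.2 hx.symm
  have hpy : 0 < dist p y := dist_pos.2 hy.symm
  have h_upper : dist x y ≤ dist p x + dist p y := dist_triangle_left x y p
  have h_lower : |dist p x - dist p y| ≤ dist x y := by
    simpa only [dist_comm p] using abs_dist_sub_le x y p
  have hneg_one_le : -1 ≤ (dist p x ^ 2 + dist p y ^ 2 - dist x y ^ 2) /
      (2 * dist p x * dist p y) := by
    rw [le_div_iff₀ (by positivity)]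
    nlinarith [pow_le_pow_left₀ dist_nonneg h_upper 2]
  have hle_one : (dist p x ^ 2 + dist p y ^ 2 - dist x y ^ 2) /
      (2 * dist p x * dist p y) ≤ 1 := by
    rw [div_le_one (by positivity)]
    nlinarith [sq_le_sq.2 (h_lower.trans (le_abs_self _))]
  rw [hinge, cangle, cos_arccos hneg_one_le hle_one,
    mul_div_cancel₀ _ (by positivity : 2 * dist p x * dist p y ≠ 0), sub_sub_cancel,
    sqrt_sq dist_nonneg]

lemma cangle_le_iff_dist_le_hinge (hx : x ≠ p) (hy : y ≠ p) (hθ : θ ∈ Icc 0 π) :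
    cangle p x y ≤ θ ↔ dist x y ≤ hinge (dist p x) (dist p y) θ := by
  rw [dist_eq_hinge_cangle hx hy]
  exact ((hinge_strictMonoOn (dist_pos.2 hx.symm) (dist_pos.2 hy.symm)).le_iff_le
    ⟨arccos_nonneg _, arccos_le_pi _⟩ hθ).symm

lemma cangle_le_add_of_hinge_add_hinge_eq {α β : ℝ} (hx : x ≠ p) (hy : y ≠ p) (hz : z ≠ p)
    (hα : 0 ≤ α) (hβ : 0 ≤ β) (hαβ : α + β ≤ π) (hxy : cangle p x y ≤ α) (hyz : cangle p y z ≤ β)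
    (h : hinge (dist p x) (dist p y) α + hinge (dist p y) (dist p z) β =
      hinge (dist p x) (dist p z) (α + β)) :
    cangle p x z ≤ α + β := by
  rw [cangle_le_iff_dist_le_hinge hx hy ⟨hα, by linarith⟩] at hxy
  rw [cangle_le_iff_dist_le_hinge hy hz ⟨hβ, by linarith⟩] at hyz
  rw [cangle_le_iff_dist_le_hinge hx hz ⟨add_nonneg hα hβ, hαβ⟩, ← h]
  exact (dist_triangle x y z).trans (add_le_add hxy hyz)

lemma cangle_add_cangle_le_pi (hpx : p ≠ x) (hpz : p ≠ z) (hxz : x ≠ z) :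
    cangle x p z + cangle p x z ≤ π := by
  have hpx' : 0 < dist p x := dist_pos.2 hpx
  have hpz' : 0 < dist p z := dist_pos.2 hpz
  have hxz' : 0 < dist x z := dist_pos.2 hxz
  have h_lower : (dist x z - dist p z) ^ 2 ≤ dist p x ^ 2 := by
    rw [dist_comm p x]
    exact sq_le_sq.2 ((abs_dist_sub_le x p z).trans (le_abs_self _))
  suffices cangle x p z ≤ π - cangle p x z by linarith
  rw [cangle, cangle, ← arccos_neg, ← neg_div, dist_comm x p]
  apply arccos_le_arccos
  rw [div_le_div_iff₀ (by positivity) (by positivity)]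
  nlinarith [mul_nonneg (mul_pos hpx' (add_pos hxz' hpz')).le (sub_nonneg.2 h_lower)]

namespace CAT0Space

variable (hX : CAT0Space X)

include hX

lemma cangle_mono_left (hx' : x' ∈ geodesicSegSet p x) (hx'p : x' ≠ p) (hy : y ≠ p) :
    cangle p x' y ≤ cangle p x y := by
  have hpx' : 0 < dist p x' := dist_pos.2 hx'p.symm
  have hpx : 0 < dist p x := dist_pos.2 (ne_of_mem_geodesicSegSet_of_ne hx' hx'p).symm
  have hpy : 0 < dist p y := dist_pos.2 hy.symm
  have hS := hX.stewartInequality hx' y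
  have hx'x : dist x' x = dist p x - dist p x' := eq_sub_of_add_eq' hx'
  rw [StewartInequality, hx'x, dist_comm y x', dist_comm y p, dist_comm y x] at hS
  apply arccos_le_arccos
  rw [div_le_div_iff₀ (by positivity) (by positivity)]
  nlinarith [mul_le_mul_of_nonneg_left hS hpy.le]

lemma cangle_mono (hx' : x' ∈ geodesicSegSet p x) (hy' : y' ∈ geodesicSegSet p y)
    (hx'p : x' ≠ p) (hy'p : y' ≠ p) : cangle p x' y' ≤ cangle p x y := by
  have hx : x ≠ p := ne_of_mem_geodesicSegSet_of_ne hx' hx'p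
  calc cangle p x' y' ≤ cangle p x y' := hX.cangle_mono_left hx' hx'p hy'p
    _ = cangle p y' x := cangle_comm p x y'
    _ ≤ cangle p y x := hX.cangle_mono_left hy' hy'p hx
    _ = cangle p x y := cangle_comm p y x

end CAT0Space

end ComparisonAngles

section Angles

variable [MetricSpace X] {p x y z x' y' z' : X} {c α β : ℝ}

lemma angle_le_cangle_of_mem (hx' : x' ∈ geodesicSegSet p x) (hy' : y' ∈ geodesicSegSet p y)
    (hx'p : x' ≠ p) (hy'p : y' ≠ p) : angle p x y ≤ cangle p x' y' := by
  refine csInf_le ⟨0, ?_⟩ ⟨x', hx', y', hy', hx'p, hy'p, rfl⟩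
  rintro _ ⟨u, -, v, -, -, -, rfl⟩
  exact arccos_nonneg _

lemma angle_le_cangle (hx : x ≠ p) (hy : y ≠ p) : angle p x y ≤ cangle p x y :=
  angle_le_cangle_of_mem (right_mem_geodesicSegSet p x) (right_mem_geodesicSegSet p y) hx hy

lemma angle_nonneg (p x y : X) : 0 ≤ angle p x y := by
  refine Real.sInf_nonneg ?_
  rintro _ ⟨u, -, v, -, -, -, rfl⟩
  exact arccos_nonneg _

lemma exists_cangle_lt_of_angle_lt (hx : x ≠ p) (hy : y ≠ p) (h : angle p x y < c) :
    ∃ x' ∈ geodesicSegSet p x, ∃ y' ∈ geodesicSegSet p y,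
      x' ≠ p ∧ y' ≠ p ∧ cangle p x' y' < c := by
  obtain ⟨_, ⟨x', hx', y', hy', hx'p, hy'p, rfl⟩, hlt⟩ := exists_lt_of_csInf_lt
    (by exact ⟨_, x, right_mem_geodesicSegSet p x, y, right_mem_geodesicSegSet p y, hx, hy, rfl⟩) h
  exact ⟨x', hx', y', hy', hx'p, hy'p, hlt⟩

lemma cangle_eq_pi (hp : p ∈ geodesicSegSet x y) (hx : x ≠ p) (hy : y ≠ p) :
    cangle p x y = π := by
  have hpx : dist p x ≠ 0 := dist_ne_zero.2 hx.symm
  have hpy : dist p y ≠ 0 := dist_ne_zero.2 hy.symm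
  have hxy : dist p x + dist p y = dist x y := dist_comm p x ▸ hp
  rw [cangle, ← hxy, ← arccos_neg_one]
  congr 1
  field_simp
  ring

lemma angle_eq_pi (hp : p ∈ geodesicSegSet x y) (hx : x ≠ p) (hy : y ≠ p) :
    angle p x y = π := by
  refine le_antisymm ((angle_le_cangle hx hy).trans (arccos_le_pi _)) ?_
  refine le_of_forall_gt fun c hc => ?_
  obtain ⟨x', hx', y', hy', hx'p, hy'p, hlt⟩ := exists_cangle_lt_of_angle_lt hx hy hc
  rwa [cangle_eq_pi (mem_geodesicSegSet_of_mem_of_mem hp hx' hy') hx'p hy'p] at hlt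

namespace CAT0Space

variable (hX : CAT0Space X)

include hX

lemma exists_forall_cangle_lt (hx : x ≠ p) (hy : y ≠ p) (h : angle p x y < c) :
    ∃ r > 0, ∀ x' ∈ geodesicSegSet p x, ∀ y' ∈ geodesicSegSet p y, x' ≠ p → y' ≠ p →
      dist p x' ≤ r → dist p y' ≤ r → cangle p x' y' < c := by
  obtain ⟨x₀, hx₀, y₀, hy₀, hx₀p, hy₀p, hlt⟩ := exists_cangle_lt_of_angle_lt hx hy h
  refine ⟨min (dist p x₀) (dist p y₀), lt_min (dist_pos.2 hx₀p.symm) (dist_pos.2 hy₀p.symm),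
    fun x' hx' y' hy' hx'p hy'p hx'r hy'r => lt_of_le_of_lt ?_ hlt⟩
  exact hX.cangle_mono
    (hX.mem_geodesicSegSet_of_dist_le hx₀ hx' (hx'r.trans (min_le_left _ _)))
    (hX.mem_geodesicSegSet_of_dist_le hy₀ hy' (hy'r.trans (min_le_right _ _))) hx'p hy'p

lemma angle_le_add_of_lt_of_lt (hx : x ≠ p) (hy : y ≠ p) (hz : z ≠ p) (hα : angle p x y < α)
    (hβ : angle p y z < β) : angle p x z ≤ α + β := by
  rcases le_or_gt π (α + β) with hπ | hπ
  · exact ((angle_le_cangle hx hz).trans (arccos_le_pi _)).trans hπ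
  have hα₀ : 0 < α := (angle_nonneg p x y).trans_lt hα
  have hβ₀ : 0 < β := (angle_nonneg p y z).trans_lt hβ
  obtain ⟨r₁, hr₁, h₁⟩ := hX.exists_forall_cangle_lt hx hy hα
  obtain ⟨r₂, hr₂, h₂⟩ := hX.exists_forall_cangle_lt hy hz hβ
  obtain ⟨r, hr, hr₁', hr₂', hrx, hry, hrz⟩ : ∃ r > 0, r ≤ r₁ ∧ r ≤ r₂ ∧
      r ≤ dist p x ∧ r ≤ dist p y ∧ r ≤ dist p z := by
    refine ⟨min (min r₁ r₂) (min (dist p x) (min (dist p y) (dist p z))), ?_, by simp⟩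
    simp only [gt_iff_lt, lt_min_iff, dist_pos]
    exact ⟨⟨hr₁, hr₂⟩, hx.symm, hy.symm, hz.symm⟩
  obtain ⟨t, ht, htr, h_hinge⟩ := exists_hinge_add_hinge_eq hr hr hα₀ hβ₀ hπ
  rw [max_self] at htr
  obtain ⟨x', hx', hpx'⟩ := hX.1.exists_mem_geodesicSegSet_dist_eq ⟨hr.le, hrx⟩
  obtain ⟨y', hy', hpy'⟩ := hX.1.exists_mem_geodesicSegSet_dist_eq ⟨ht.le, htr.trans hry⟩
  obtain ⟨z', hz', hpz'⟩ := hX.1.exists_mem_geodesicSegSet_dist_eq ⟨hr.le, hrz⟩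
  have hx'p : x' ≠ p := (dist_pos.1 (hpx' ▸ hr)).symm
  have hy'p : y' ≠ p := (dist_pos.1 (hpy' ▸ ht)).symm
  have hz'p : z' ≠ p := (dist_pos.1 (hpz' ▸ hr)).symm
  have hxy := h₁ x' hx' y' hy' hx'p hy'p (by linarith) (by linarith)
  have hyz := h₂ y' hy' z' hz' hy'p hz'p (by linarith) (by linarith)
  exact (angle_le_cangle_of_mem hx' hz' hx'p hz'p).trans <|
    cangle_le_add_of_hinge_add_hinge_eq hx'p hy'p hz'p hα₀.le hβ₀.le hπ.le hxy.le hyz.le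
      (by rwa [hpx', hpy', hpz'])

lemma angle_triangle (hx : x ≠ p) (hy : y ≠ p) (hz : z ≠ p) :
    angle p x z ≤ angle p x y + angle p y z := by
  refine le_of_forall_pos_le_add fun ε hε => ?_
  have h := hX.angle_le_add_of_lt_of_lt hx hy hz (lt_add_of_pos_right _ (half_pos hε))
    (lt_add_of_pos_right _ (half_pos hε))
  linarith

lemma cangle_le_angle_of_mem (hp : p ∈ geodesicSegSet x y) (hxp : x ≠ p) (hyp : y ≠ p)
    (hzp : z ≠ p) (hxz : x ≠ z) : cangle x p z ≤ angle p y z := by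
  have h_straight : angle p y x ≤ angle p y z + angle p z x := hX.angle_triangle hyp hzp hxp
  rw [angle_eq_pi (mem_geodesicSegSet_comm.1 hp) hyp hxp] at h_straight
  have h_euclidean := cangle_add_cangle_le_pi hxp.symm hzp.symm hxz
  rw [cangle_comm p x z] at h_euclidean
  linarith [angle_le_cangle hzp hxp]

lemma angle_le_angle_add_cangle_add_cangle (hy : y ≠ p) (hz : z ≠ p) (hy' : y' ≠ p)
    (hz' : z' ≠ p) : angle p y z ≤ angle p y' z' + cangle p y y' + cangle p z' z := by
  linarith [hX.angle_triangle hy hy' hz, hX.angle_triangle hy' hz' hz, angle_le_cangle hy hy',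
    angle_le_cangle hz' hz]

end CAT0Space

end Angles

section Ultralimits

variable {Xs : ℕ → Type*} [∀ n, MetricSpace (Xs n)] {ω : Ultrafilter ℕ} {b : ∀ n, Xs n}
  {l : ℕ → ℝ}

namespace BddSeq

/-- The point of the ultralimit represented by a bounded sequence. -/
def toUltralimit (hl : ∀ᶠ n in (ω : Filter ℕ), 0 < l n) (u : BddSeq Xs ω b l) :
    Ultralimit Xs ω b l hl :=
  Quotient.mk (ulimSetoid Xs ω b l hl) u

/-- A sequence of points on the segments joining two bounded sequences, as a bounded sequence. -/
def ofMemSegment (u v : BddSeq Xs ω b l) (w : ∀ n, Xs n)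
    (hw : ∀ n, w n ∈ geodesicSegSet (u.seq n) (v.seq n)) : BddSeq Xs ω b l where
  seq := w
  bdd := by
    obtain ⟨Cu, hCu⟩ := u.bdd
    obtain ⟨Cv, hCv⟩ := v.bdd
    refine ⟨2 * Cu + Cv, ?_⟩
    filter_upwards [hCu, hCv] with n hu hv
    linarith [dist_triangle_left (w n) (b n) (u.seq n), dist_le_of_mem_geodesicSegSet (hw n),
      dist_triangle_right (u.seq n) (v.seq n) (b n)]

variable {hl : ∀ᶠ n in (ω : Filter ℕ), 0 < l n} {p u v w x y z : BddSeq Xs ω b l}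

lemma tendsto_dist_div_zero_of_eq (h : u.toUltralimit hl = v.toUltralimit hl) :
    Tendsto (fun n => dist (u.seq n) (v.seq n) / l n) ω (nhds 0) := by
  have hrel : ∀ ε > 0, ∀ᶠ n in (ω : Filter ℕ), dist (u.seq n) (v.seq n) ≤ ε * l n :=
    Quotient.exact h
  rw [tendsto_order]
  refine ⟨fun a ha => ?_, fun a ha => ?_⟩
  · filter_upwards [hl] with n hn
    exact ha.trans_le (div_nonneg dist_nonneg hn.le)
  · filter_upwards [hl, hrel (a / 2) (half_pos ha)] with n hn hle
    exact ((div_le_iff₀ hn).2 hle).trans_lt (half_lt_self ha)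

lemma tendsto_dist_div (u v : BddSeq Xs ω b l) :
    Tendsto (fun n => dist (u.seq n) (v.seq n) / l n) ω
      (nhds (dist (u.toUltralimit hl) (v.toUltralimit hl))) := by
  set U := u.toUltralimit hl with hU
  set V := v.toUltralimit hl with hV
  have hu : Tendsto (fun n => dist (U.out.seq n) (u.seq n) / l n) ω (nhds 0) :=
    tendsto_dist_div_zero_of_eq ((Quotient.out_eq U).trans hU)
  have hv : Tendsto (fun n => dist (V.out.seq n) (v.seq n) / l n) ω (nhds 0) :=
    tendsto_dist_div_zero_of_eq ((Quotient.out_eq V).trans hV)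
  have hUV : Tendsto (fun n => dist (U.out.seq n) (V.out.seq n) / l n) ω (nhds (dist U V)) :=
    ulimDist_tendsto U V
  refine tendsto_of_tendsto_of_dist hUV ?_
  refine squeeze_zero' (.of_forall fun n => dist_nonneg) ?_ (by simpa using hu.add hv)
  filter_upwards [hl] with n hn
  rw [Real.dist_eq, ← sub_div, abs_div, abs_of_pos hn, ← add_div, ← Real.dist_eq]
  gcongr
  exact dist_dist_dist_le _ _ _ _

lemma toUltralimit_eq_of_tendsto
    (h : Tendsto (fun n => dist (u.seq n) (v.seq n) / l n) ω (nhds 0)) :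
    u.toUltralimit hl = v.toUltralimit hl :=
  dist_eq_zero.1 (tendsto_nhds_unique (tendsto_dist_div u v) h)

lemma eventually_ne (h : u.toUltralimit hl ≠ v.toUltralimit hl) :
    ∀ᶠ n in (ω : Filter ℕ), u.seq n ≠ v.seq n := by
  filter_upwards [(tendsto_dist_div u v).eventually_ne (dist_ne_zero.2 h)] with n hn huv
  exact hn (by rw [huv, dist_self, zero_div])

lemma tendsto_cangle (hx : x.toUltralimit hl ≠ p.toUltralimit hl)
    (hy : y.toUltralimit hl ≠ p.toUltralimit hl) :
    Tendsto (fun n => cangle (p.seq n) (x.seq n) (y.seq n)) ω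
      (nhds (cangle (p.toUltralimit hl) (x.toUltralimit hl) (y.toUltralimit hl))) := by
  have hpx := tendsto_dist_div (hl := hl) p x
  have hpy := tendsto_dist_div (hl := hl) p y
  have hxy := tendsto_dist_div (hl := hl) x y
  have hne : 2 * dist (p.toUltralimit hl) (x.toUltralimit hl) *
      dist (p.toUltralimit hl) (y.toUltralimit hl) ≠ 0 :=
    mul_ne_zero (mul_ne_zero two_ne_zero (dist_ne_zero.2 hx.symm)) (dist_ne_zero.2 hy.symm)
  have hlim := (continuous_arccos.tendsto _).comp
    ((((hpx.pow 2).add (hpy.pow 2)).sub (hxy.pow 2)).div ((hpx.const_mul 2).mul hpy) hne)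
  refine hlim.congr' ?_
  filter_upwards [hl] with n hn
  rw [Function.comp_apply, Pi.div_apply, cangle]
  congr 1
  field_simp

lemma toUltralimit_mem_geodesicSegSet
    (h : ∀ᶠ n in (ω : Filter ℕ), w.seq n ∈ geodesicSegSet (u.seq n) (v.seq n)) :
    w.toUltralimit hl ∈ geodesicSegSet (u.toUltralimit hl) (v.toUltralimit hl) := by
  refine tendsto_nhds_unique ((tendsto_dist_div u w).add (tendsto_dist_div w v))
    ((tendsto_dist_div u v).congr' ?_)
  filter_upwards [h] with n hn
  rw [← add_div, show dist (u.seq n) (w.seq n) + dist (w.seq n) (v.seq n) = _ from hn]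

lemma stewartInequality_toUltralimit
    (h : ∀ᶠ n in (ω : Filter ℕ), StewartInequality (u.seq n) (v.seq n) (w.seq n) (z.seq n)) :
    StewartInequality (u.toUltralimit hl) (v.toUltralimit hl) (w.toUltralimit hl)
      (z.toUltralimit hl) := by
  have huv := tendsto_dist_div (hl := hl) u v
  have huw := tendsto_dist_div (hl := hl) u w
  have hwv := tendsto_dist_div (hl := hl) w v
  have hz (a : BddSeq Xs ω b l) := (tendsto_dist_div (hl := hl) z a).pow 2
  refine le_of_tendsto_of_tendsto (huv.mul (hz w))
    (((hwv.mul (hz u)).add (huw.mul (hz v))).sub ((huw.mul hwv).mul huv)) ?_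
  filter_upwards [h, hl] with n hn hln
  convert div_le_div_of_nonneg_right hn (pow_pos hln 3).le using 1 <;> field_simp

lemma exists_mem_segment_dist_eq (hX : ∀ n, GeodesicSpace (Xs n)) (u v : BddSeq Xs ω b l) {r : ℝ}
    (hr : r ∈ Icc 0 (dist (u.toUltralimit hl) (v.toUltralimit hl))) :
    ∃ w : BddSeq Xs ω b l, (∀ n, w.seq n ∈ geodesicSegSet (u.seq n) (v.seq n)) ∧
      dist (u.toUltralimit hl) (w.toUltralimit hl) = r := by
  -- `max 0` only matters for the exceptional `n` with `l n < 0`.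
  choose w hw hdist using fun n => (hX n).exists_mem_geodesicSegSet_dist_eq
    (r := min (max 0 (r * l n)) (dist (u.seq n) (v.seq n)))
    ⟨le_min (le_max_left _ _) dist_nonneg, min_le_right _ _⟩
  refine ⟨u.ofMemSegment v w hw, hw, ?_⟩
  have hlim := (tendsto_const_nhds (x := r)).min (tendsto_dist_div (hl := hl) u v)
  rw [min_eq_left hr.2] at hlim
  refine tendsto_nhds_unique (tendsto_dist_div u (u.ofMemSegment v w hw)) (hlim.congr' ?_)
  filter_upwards [hl] with n hn
  rw [ofMemSegment, hdist n, max_eq_right (mul_nonneg hr.1 hn.le), ← min_div_div_right hn.le,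
    mul_div_cancel_right₀ r hn.ne']

lemma exists_mem_segment_toUltralimit_eq (hX : ∀ n, CAT0Space (Xs n)) {P : Ultralimit Xs ω b l hl}
    (hP : P ∈ geodesicSegSet (u.toUltralimit hl) (v.toUltralimit hl)) :
    ∃ w : BddSeq Xs ω b l, (∀ n, w.seq n ∈ geodesicSegSet (u.seq n) (v.seq n)) ∧
      w.toUltralimit hl = P := by
  obtain ⟨p, rfl⟩ : ∃ p : BddSeq Xs ω b l, p.toUltralimit hl = P := Quotient.exists_rep P
  obtain ⟨w, hw, hdist⟩ := exists_mem_segment_dist_eq (fun n => (hX n).1) u v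
    ⟨dist_nonneg, dist_le_of_mem_geodesicSegSet hP⟩
  have hS : StewartInequality (u.toUltralimit hl) (v.toUltralimit hl) (w.toUltralimit hl)
      (p.toUltralimit hl) :=
    stewartInequality_toUltralimit (.of_forall fun n => (hX n).stewartInequality (hw n) (p.seq n))
  exact ⟨w, hw, (hS.eq_of_dist_eq (toUltralimit_mem_geodesicSegSet (.of_forall hw)) hP
    hdist.symm).symm⟩

lemma eventually_angle_lt (hX : ∀ n, CAT0Space (Xs n))
    (hx : x.toUltralimit hl ≠ p.toUltralimit hl) (hy : y.toUltralimit hl ≠ p.toUltralimit hl)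
    {c : ℝ} (h : angle (p.toUltralimit hl) (x.toUltralimit hl) (y.toUltralimit hl) < c) :
    ∀ᶠ n in (ω : Filter ℕ), angle (p.seq n) (x.seq n) (y.seq n) < c := by
  obtain ⟨P, hP, Q, hQ, hPp, hQp, hlt⟩ := exists_cangle_lt_of_angle_lt hx hy h
  obtain ⟨x', hx', rfl⟩ := exists_mem_segment_toUltralimit_eq hX hP
  obtain ⟨y', hy', rfl⟩ := exists_mem_segment_toUltralimit_eq hX hQ
  filter_upwards [eventually_ne hPp, eventually_ne hQp, (tendsto_cangle hPp hQp).eventually_lt_const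
    hlt] with n hx'p hy'p hn
  exact (angle_le_cangle_of_mem (hx' n) (hy' n) hx'p hy'p).trans_lt hn

lemma exists_mem_segment_dist_lt (hX : ∀ n, GeodesicSpace (Xs n))
    (huv : u.toUltralimit hl ≠ v.toUltralimit hl) {ε : ℝ} (hε : 0 < ε) :
    ∃ w : BddSeq Xs ω b l, (∀ n, w.seq n ∈ geodesicSegSet (u.seq n) (v.seq n)) ∧
      w.toUltralimit hl ≠ u.toUltralimit hl ∧
      dist (u.toUltralimit hl) (w.toUltralimit hl) < ε := by
  have hpos : 0 < min (ε / 2) (dist (u.toUltralimit hl) (v.toUltralimit hl)) :=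
    lt_min (half_pos hε) (dist_pos.2 huv)
  obtain ⟨w, hw, hdist⟩ := exists_mem_segment_dist_eq hX u v ⟨hpos.le, min_le_right _ _⟩
  exact ⟨w, hw, (dist_pos.1 (hdist ▸ hpos)).symm,
    hdist.trans_lt ((min_le_left _ _).trans_lt (half_lt_self hε))⟩

end BddSeq

lemma exists_tendsto_atTop_eventually_diagonal {f : Filter ℕ} (hf : f ≤ atTop)
    {G : ℕ → ℕ → Prop} (hG : ∀ j, ∀ᶠ n in f, G j n) :
    ∃ J : ℕ → ℕ, Tendsto J f atTop ∧ ∀ᶠ n in f, G (J n) n := by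
  classical
  refine ⟨fun n => Nat.findGreatest (G · n) n, tendsto_atTop.2 fun j => ?_, ?_⟩
  · filter_upwards [hG j, hf (eventually_ge_atTop j)] with n hn hjn
    exact Nat.le_findGreatest hjn hn
  · filter_upwards [hG 0] with n hn
    exact Nat.findGreatest_spec (P := (G · n)) n.zero_le hn

lemma IsNonprincipal.le_atTop (hω : IsNonprincipal ω) : (ω : Filter ℕ) ≤ atTop := by
  rw [← Nat.cofinite_eq_atTop]
  exact fun s hs => Ultrafilter.compl_notMem_iff.1 (hω sᶜ hs)

namespace BddSeq

variable {hl : ∀ᶠ n in (ω : Filter ℕ), 0 < l n} {x y z : BddSeq Xs ω b l}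

-- Comparison angles at the points `w j` of `[x, y]` bound the angle from above; the diagonal
-- sequence lets `j` tend to infinity so slowly that these bounds survive at finite stages.
lemma exists_mem_segment_forall_lt_cangle (hω : IsNonprincipal ω)
    (hX : ∀ n, GeodesicSpace (Xs n)) (hxy : x.toUltralimit hl ≠ y.toUltralimit hl)
    (hxz : x.toUltralimit hl ≠ z.toUltralimit hl) :
    ∃ x' : BddSeq Xs ω b l, (∀ n, x'.seq n ∈ geodesicSegSet (x.seq n) (y.seq n)) ∧
      x'.toUltralimit hl = x.toUltralimit hl ∧ (∀ᶠ n in (ω : Filter ℕ), x'.seq n ≠ x.seq n) ∧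
      ∀ a < angle (x.toUltralimit hl) (y.toUltralimit hl) (z.toUltralimit hl),
        ∀ᶠ n in (ω : Filter ℕ), a < cangle (x.seq n) (x'.seq n) (z.seq n) := by
  set θ := angle (x.toUltralimit hl) (y.toUltralimit hl) (z.toUltralimit hl)
  have hε (j : ℕ) : (0 : ℝ) < 1 / (j + 1) := Nat.one_div_pos_of_nat
  choose w hw hwx hdist using fun j => exists_mem_segment_dist_lt hX hxy (hε j)
  have hθ (j : ℕ) : θ - 1 / (j + 1) <
      cangle (x.toUltralimit hl) ((w j).toUltralimit hl) (z.toUltralimit hl) :=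
    (sub_lt_self θ (hε j)).trans_le <| angle_le_cangle_of_mem
      (toUltralimit_mem_geodesicSegSet (.of_forall (hw j))) (right_mem_geodesicSegSet _ _) (hwx j)
      hxz.symm
  obtain ⟨J, hJ, hG⟩ := exists_tendsto_atTop_eventually_diagonal hω.le_atTop fun j =>
    (eventually_ne (hwx j)).and <|
      ((tendsto_dist_div x (w j)).eventually_lt_const (hdist j)).and
        ((tendsto_cangle (hwx j) hxz.symm).eventually_const_lt (hθ j))
  have hJ_zero : Tendsto (fun n => 1 / ((J n : ℝ) + 1)) ω (nhds 0) :=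
    tendsto_one_div_add_atTop_nhds_zero_nat.comp hJ
  refine ⟨x.ofMemSegment y (fun n => (w (J n)).seq n) (fun n => hw (J n) n),
    fun n => hw (J n) n, Eq.symm (toUltralimit_eq_of_tendsto ?_), hG.mono fun n h => h.1,
    fun a ha => ?_⟩
  · refine squeeze_zero' ?_ (hG.mono fun n h => h.2.1.le) hJ_zero
    exact hl.mono fun n hn => div_nonneg dist_nonneg hn.le
  · filter_upwards [hG, hJ_zero.eventually_lt_const (sub_pos.2 ha)] with n hn hJn
    exact (lt_sub_comm.1 hJn).trans hn.2.2

lemma eventually_lt_angle_of_eventually_lt_cangle (hX : ∀ n, CAT0Space (Xs n))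
    {x' y' z' : BddSeq Xs ω b l}
    (hxy : x.toUltralimit hl ≠ y.toUltralimit hl) (hxz : x.toUltralimit hl ≠ z.toUltralimit hl)
    (hmem : ∀ n, x'.seq n ∈ geodesicSegSet (x.seq n) (y.seq n))
    (hx' : x'.toUltralimit hl = x.toUltralimit hl) (hy' : y'.toUltralimit hl = y.toUltralimit hl)
    (hz' : z'.toUltralimit hl = z.toUltralimit hl)
    (hne : ∀ᶠ n in (ω : Filter ℕ), x'.seq n ≠ x.seq n) {a c : ℝ} (hac : a < c)
    (hc : ∀ᶠ n in (ω : Filter ℕ), c < cangle (x.seq n) (x'.seq n) (z.seq n)) :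
    ∀ᶠ n in (ω : Filter ℕ), a < angle (x'.seq n) (y'.seq n) (z'.seq n) := by
  have hyx' : y.toUltralimit hl ≠ x'.toUltralimit hl := hx' ▸ hxy.symm
  have hzx' : z.toUltralimit hl ≠ x'.toUltralimit hl := hx' ▸ hxz.symm
  have hy'x' : y'.toUltralimit hl ≠ x'.toUltralimit hl := hy' ▸ hyx'
  have hz'x' : z'.toUltralimit hl ≠ x'.toUltralimit hl := hz' ▸ hzx'
  have hsmall : Tendsto (fun n => cangle (x'.seq n) (y.seq n) (y'.seq n) +
      cangle (x'.seq n) (z'.seq n) (z.seq n)) ω (nhds 0) := by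
    have h := (tendsto_cangle hyx' hy'x').add (tendsto_cangle hz'x' hzx')
    rwa [hy', hz', cangle_self hyx', cangle_self hzx', add_zero] at h
  filter_upwards [hc, hne, eventually_ne hyx', eventually_ne hzx', eventually_ne hy'x',
    eventually_ne hz'x', eventually_ne hxz, hsmall.eventually_lt_const (sub_pos.2 hac)]
    with n hcn hx'n hyn hzn hy'n hz'n hxzn hsn
  have h_exterior := (hX n).cangle_le_angle_of_mem (hmem n) hx'n.symm hyn hzn hxzn
  linarith [(hX n).angle_le_angle_add_cangle_add_cangle hyn hzn hy'n hz'n]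

end BddSeq

theorem ultralimit_angle_general (hX : ∀ n, CAT0Space (Xs n)) (hω : IsNonprincipal ω)
    (hl : ∀ᶠ n in (ω : Filter ℕ), 0 < l n) (x y z : BddSeq Xs ω b l)
    (hxy : x.toUltralimit hl ≠ y.toUltralimit hl) (hxz : x.toUltralimit hl ≠ z.toUltralimit hl) :
    ∃ x' : BddSeq Xs ω b l, x'.toUltralimit hl = x.toUltralimit hl ∧
      (∀ n, x'.seq n ∈ geodesicSegSet (x.seq n) (y.seq n)) ∧
      ∀ y' z' : BddSeq Xs ω b l, y'.toUltralimit hl = y.toUltralimit hl →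
        z'.toUltralimit hl = z.toUltralimit hl →
        Tendsto (fun n => angle (x'.seq n) (y'.seq n) (z'.seq n)) ω
          (nhds (angle (x.toUltralimit hl) (y.toUltralimit hl) (z.toUltralimit hl))) := by
  obtain ⟨x', hmem, hx', hne, hcangle⟩ :=
    BddSeq.exists_mem_segment_forall_lt_cangle hω (fun n => (hX n).1) hxy hxz
  refine ⟨x', hx', hmem, fun y' z' hy' hz' => tendsto_order.2 ⟨fun a ha => ?_, fun c hc => ?_⟩⟩
  · obtain ⟨c, hac, hc⟩ := exists_between ha
    exact BddSeq.eventually_lt_angle_of_eventually_lt_cangle hX hxy hxz hmem hx' hy' hz' hne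
      hac (hcangle c hc)
  · rw [← hx', ← hy', ← hz'] at hc
    rw [← hx', ← hy'] at hxy
    rw [← hx', ← hz'] at hxz
    exact BddSeq.eventually_angle_lt hX hxy.symm hxz.symm hc

end Ultralimits

/-! ## STATEMENT 14: angles in ultralimits -/

/-- **Proposition.** Let `X = ω-lim (X_k, d_k, ⋆_k)` be an ultralimit of based CAT(0)
spaces and let `x, y, z ∈ X` with `x ≠ y`, `x ≠ z` be represented by `(x_k), (y_k),
(z_k)`.  Then there is a sequence `(x'_k)` representing `x` with `x'_k ∈ [x_k, y_k]` such
that for all sequences `(y'_k)`, `(z'_k)` representing `y` and `z`,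
`ω-lim ∠_{x'_k}(y'_k, z'_k) = ∠_x(y,z)`. -/
theorem ultralimit_angle
    (Xs : ℕ → Type*) [∀ n, MetricSpace (Xs n)] (hcat : ∀ n, CAT0Space (Xs n))
    (ω : Ultrafilter ℕ) (hω : IsNonprincipal ω) (b : ∀ n, Xs n)
    (hl : ∀ᶠ n in (ω : Filter ℕ), 0 < (fun _ : ℕ => (1:ℝ)) n)
    (x y z : Ultralimit Xs ω b (fun _ => (1:ℝ)) hl)
    (hxy : x ≠ y) (hxz : x ≠ z)
    (xk yk zk : BddSeq Xs ω b (fun _ => (1:ℝ)))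
    (hx : Quotient.mk (ulimSetoid Xs ω b (fun _ => (1:ℝ)) hl) xk = x)
    (hy : Quotient.mk (ulimSetoid Xs ω b (fun _ => (1:ℝ)) hl) yk = y)
    (hz : Quotient.mk (ulimSetoid Xs ω b (fun _ => (1:ℝ)) hl) zk = z) :
    ∃ xk' : BddSeq Xs ω b (fun _ => (1:ℝ)),
      Quotient.mk (ulimSetoid Xs ω b (fun _ => (1:ℝ)) hl) xk' = x ∧
      (∀ n, xk'.seq n ∈ geodesicSegSet (xk.seq n) (yk.seq n)) ∧
      ∀ yk' zk' : BddSeq Xs ω b (fun _ => (1:ℝ)),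
        Quotient.mk (ulimSetoid Xs ω b (fun _ => (1:ℝ)) hl) yk' = y →
        Quotient.mk (ulimSetoid Xs ω b (fun _ => (1:ℝ)) hl) zk' = z →
        limUnder (ω : Filter ℕ) (fun n => angle (xk'.seq n) (yk'.seq n) (zk'.seq n))
          = angle x y z := by
  subst hx hy hz
  obtain ⟨xk', hx', hmem, hlim⟩ := ultralimit_angle_general hcat hω hl xk yk zk hxy hxz
  exact ⟨xk', hx', hmem, fun yk' zk' hy' hz' => (hlim yk' zk' hy' hz').limUnder_eq⟩
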